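/- arXiv:2107.04963 — 4 statements merged into one kernel-verified Lean document; each statement's English description precedes it below -/
import Mathlib

section
/- Iwasawa decomposition of GL(n,ℚ_p): for every invertible n×n matrix A over ℚ_p there exist invertible n×n matrices k and b over ℚ_p such that A = k·b, where every entry of k and every entry of k⁻¹ has norm at most 1 (i.e. k lies in GL(n,ℤ_p)), and b is upper triangular. -/
open Matrix

/-!
The proof is Gaussian elimination by integral row operations. To clear a column below its pivot
position, an entry of maximal norm on or below the pivot is first swapped into it; all the
multipliers needed are then quotients of norm at most `1`, so the row operations are invertible
over `ℤ_[p]` (`exists_integral_clear_column`). Clearing the columns from left to right gives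
`k ∈ GL(n, ℤ_p)` with `k * A` upper triangular (`exists_integral_clear_columns`), and then
`A = k⁻¹ * (k * A)`.
-/

/-- The inclusion `GL(n, ℤ_p) → GL(n, ℚ_p)`. -/
noncomputable abbrev glIncl (p : ℕ) [Fact p.Prime] (n : ℕ) :
    GL (Fin n) ℤ_[p] →* GL (Fin n) ℚ_[p] :=
  GeneralLinearGroup.map PadicInt.Coe.ringHom

/-- Swapping two rows is an integral row operation. -/
lemma exists_integral_swap (p : ℕ) [Fact p.Prime] {n : ℕ} (a b : Fin n) :
    ∃ k : GL (Fin n) ℤ_[p], ∀ (M : Matrix (Fin n) (Fin n) ℚ_[p]) (i j : Fin n),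
      ((glIncl p n k : Matrix (Fin n) (Fin n) ℚ_[p]) * M) i j = M (Equiv.swap a b i) j := by
  have hu : IsUnit ((Equiv.swap a b).permMatrix ℤ_[p]).det := by
    rw [det_permutation]
    exact (Units.isUnit (Equiv.Perm.sign (Equiv.swap a b))).map (Int.castRingHom ℤ_[p])
  refine ⟨GeneralLinearGroup.mk'' _ hu, fun M i j => ?_⟩
  have h : (glIncl p n (GeneralLinearGroup.mk'' _ hu) : Matrix (Fin n) (Fin n) ℚ_[p])
      = (Equiv.swap a b).permMatrix ℚ_[p] := by
    ext i j
    change ((Equiv.swap a b).permMatrix ℤ_[p] i j : ℚ_[p]) = _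
    simp only [Equiv.Perm.permMatrix, PEquiv.toMatrix_apply]
    split_ifs <;> simp
  rw [h, Equiv.Perm.permMatrix, PEquiv.toMatrix_toPEquiv_mul]
  rfl

/-- Adding integral multiples `c i` of row `m` to the other rows is an integral row operation. -/
lemma exists_integral_add_rows (p : ℕ) [Fact p.Prime] {n : ℕ} (m : Fin n)
    (c : Fin n → ℤ_[p]) (hc : c m = 0) :
    ∃ k : GL (Fin n) ℤ_[p], ∀ (M : Matrix (Fin n) (Fin n) ℚ_[p]) (i j : Fin n),
      ((glIncl p n k : Matrix (Fin n) (Fin n) ℚ_[p]) * M) i j = M i j + c i * M m j := by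
  have hu : IsUnit (1 + vecMulVec c (Pi.single m 1) : Matrix (Fin n) (Fin n) ℤ_[p]).det := by
    rw [vecMulVec_eq Unit, det_one_add_replicateCol_mul_replicateRow]
    simp [hc]
  refine ⟨GeneralLinearGroup.mk'' _ hu, fun M i j => ?_⟩
  have h : (glIncl p n (GeneralLinearGroup.mk'' _ hu) : Matrix (Fin n) (Fin n) ℚ_[p])
      = 1 + vecMulVec (fun i => (c i : ℚ_[p])) (Pi.single m 1) := by
    ext i j
    change (((1 + vecMulVec c (Pi.single m 1) : Matrix (Fin n) (Fin n) ℤ_[p]) i j : ℤ_[p]) : ℚ_[p])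
      = _
    simp only [Matrix.add_apply, vecMulVec_apply, Matrix.one_apply, Pi.single_apply]
    split_ifs <;> simp
  rw [h, add_mul, one_mul, vecMulVec_mul, Matrix.add_apply, vecMulVec_apply, single_one_vecMul]
  rfl

/-- If the columns before `m` are already cleared below the diagonal, then column `m` can be
cleared as well, keeping the earlier ones, by integral row operations. -/
lemma exists_integral_clear_column (p : ℕ) [Fact p.Prime] {n : ℕ} (m : Fin n)
    (M : Matrix (Fin n) (Fin n) ℚ_[p]) (hM : ∀ i j, j < m → j < i → M i j = 0) :
    ∃ k : GL (Fin n) ℤ_[p], ∀ i j, j ≤ m → j < i →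
      ((glIncl p n k : Matrix (Fin n) (Fin n) ℚ_[p]) * M) i j = 0 := by
  obtain ⟨r, hr, hmax⟩ :=
    (Finset.Ici m).exists_max_image (fun i => ‖M i m‖) ⟨m, by simp⟩
  simp only [Finset.mem_Ici] at hr hmax
  obtain ⟨s, hs⟩ := exists_integral_swap p m r
  set N : Matrix (Fin n) (Fin n) ℚ_[p] := (glIncl p n s : Matrix (Fin n) (Fin n) ℚ_[p]) * M
    with hN
  replace hs : ∀ i j, N i j = M (Equiv.swap m r i) j := hs M
  have swap_ge : ∀ i, m ≤ i → m ≤ Equiv.swap m r i := by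
    intro i hi
    rw [Equiv.swap_apply_def]
    split_ifs <;> first | assumption | exact le_rfl
  have hNm : N m m = M r m := by rw [hs, Equiv.swap_apply_left]
  have hNmax : ∀ i, m ≤ i → ‖N i m‖ ≤ ‖N m m‖ := by
    intro i hi
    rw [hNm, hs]
    exact hmax _ (swap_ge i hi)
  have hN0 : ∀ i j, j < m → j < i → N i j = 0 := by
    intro i j hj hji
    rw [hs]
    rcases lt_or_ge i m with hi | hi
    · rw [Equiv.swap_apply_of_ne_of_ne hi.ne (hi.trans_le hr).ne]
      exact hM i j hj hji
    · exact hM _ j hj (hj.trans_le (swap_ge i hi))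
  -- If the pivot vanishes, so does the column below it; the multipliers are then `0 / 0 = 0`.
  let c : Fin n → ℤ_[p] := fun i =>
    if h : m < i then ⟨-(N i m / N m m), by
      rw [norm_neg, norm_div]
      exact div_le_one_of_le₀ (hNmax i h.le) (norm_nonneg _)⟩ else 0
  obtain ⟨t, ht⟩ := exists_integral_add_rows p m c (by simp [c])
  refine ⟨t * s, fun i j hj hji => ?_⟩
  rw [map_mul, Units.val_mul, Matrix.mul_assoc, ← hN, ht]
  rcases hj.lt_or_eq with hj | rfl
  · rw [hN0 i j hj hji, hN0 m j hj hj, mul_zero, add_zero]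
  · have hc : (c i : ℚ_[p]) = -(N i j / N j j) :=
      congrArg (fun x : ℤ_[p] => (x : ℚ_[p])) (dif_pos hji)
    rw [hc]
    by_cases h0 : N j j = 0
    · have := hNmax i hji.le
      rw [h0, norm_zero, norm_le_zero_iff] at this
      simp [this, h0]
    · field_simp
      ring

lemma exists_integral_clear_columns (p : ℕ) [Fact p.Prime] {n : ℕ}
    (A : Matrix (Fin n) (Fin n) ℚ_[p]) (m : ℕ) (hm : m ≤ n) :
    ∃ k : GL (Fin n) ℤ_[p], ∀ i j : Fin n, (j : ℕ) < m → j < i →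
      ((glIncl p n k : Matrix (Fin n) (Fin n) ℚ_[p]) * A) i j = 0 := by
  induction m with
  | zero => exact ⟨1, fun i j h => absurd h (Nat.not_lt_zero _)⟩
  | succ m ih =>
    obtain ⟨k, hk⟩ := ih (by omega)
    obtain ⟨l, hl⟩ := exists_integral_clear_column p ⟨m, hm⟩ _ (fun i j hj hji => hk i j hj hji)
    refine ⟨l * k, fun i j hj hji => ?_⟩
    rw [map_mul, Units.val_mul, Matrix.mul_assoc]
    exact hl i j (Nat.lt_succ_iff.1 hj) hji

/-- **Iwasawa decomposition of `GL(n, ℚ_p)`**: every invertible `n × n` matrix `A` over `ℚ_p`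
factors as `A = k * b` where `k ∈ GL(n, ℤ_p)` (all entries of `k` and of `k⁻¹` have norm at
most `1`) and `b` is upper triangular. -/
theorem iwasawa_GL (p : ℕ) [Fact p.Prime] (n : ℕ) (A : GL (Fin n) ℚ_[p]) :
    ∃ k b : GL (Fin n) ℚ_[p],
      A = k * b ∧
      (∀ i j, ‖(k : Matrix (Fin n) (Fin n) ℚ_[p]) i j‖ ≤ 1) ∧
      (∀ i j, ‖((k⁻¹ : GL (Fin n) ℚ_[p]) : Matrix (Fin n) (Fin n) ℚ_[p]) i j‖ ≤ 1) ∧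
      (∀ i j : Fin n, j < i → (b : Matrix (Fin n) (Fin n) ℚ_[p]) i j = 0) := by
  obtain ⟨k, hk⟩ := exists_integral_clear_columns p (A : Matrix (Fin n) (Fin n) ℚ_[p]) n le_rfl
  have integral : ∀ (g : GL (Fin n) ℤ_[p]) (i j : Fin n),
      ‖(glIncl p n g : Matrix (Fin n) (Fin n) ℚ_[p]) i j‖ ≤ 1 := fun g i j => (g.val i j).2
  refine ⟨glIncl p n k⁻¹, glIncl p n k * A, ?_, integral _, ?_, fun i j h => hk i j j.2 h⟩
  · rw [map_inv, inv_mul_cancel_left]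
  · rw [← map_inv, inv_inv]
    exact integral k
end

section
/- Iwasawa decomposition of SL(n,ℚ_p): for every n×n matrix A over ℚ_p with determinant 1 there exist n×n matrices k and b over ℚ_p with determinant 1 such that A = k·b, where every entry of k and every entry of k⁻¹ has norm at most 1 (i.e. k lies in SL(n,ℤ_p)), and b is upper triangular. -/
open Matrix

/-!
The proof is Gaussian elimination carried out with integral row operations. Since the norm on
`ℚ_p` takes values in a total order, a vector has an entry of largest norm, and dividing the other
entries by it gives elements of `ℤ_p`. So a pivot of largest norm can be moved to the top of the
first column (`exists_pivot`), and the rest of that column can be cleared by a unipotent matrix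
over `ℤ_p`. By induction on `n`, the remaining minor is made upper triangular by a matrix of
determinant `1` over `ℤ_p`, which `borderMatrix` extends by one row and column
(`exists_mul_upperTriangular`). This yields `g ∈ SL(n, ℤ_p)` with `g * A` upper triangular, and
`A = g⁻¹ * (g * A)` is the decomposition.
-/

/-- The block matrix with rows `(1, 0)` and `(u, h)`, where the first block has size `1`. -/
def borderMatrix {R : Type*} [CommRing R] {n : ℕ} (u : Fin n → R) (h : Matrix (Fin n) (Fin n) R) :
    Matrix (Fin (n + 1)) (Fin (n + 1)) R :=
  of (Fin.cons (Fin.cons 1 0) fun i => Fin.cons (u i) (h i))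

lemma det_borderMatrix {R : Type*} [CommRing R] {n : ℕ} (u : Fin n → R)
    (h : Matrix (Fin n) (Fin n) R) : (borderMatrix u h).det = h.det := by
  rw [det_succ_row_zero, Fin.sum_univ_succ]
  have hsub : (borderMatrix u h).submatrix Fin.succ Fin.succ = h := by
    ext i j
    simp [borderMatrix]
  simp [borderMatrix] at hsub ⊢
  rw [hsub]

/-- An integral row operation of determinant `1` makes the top entry of the first column one of
largest norm: if the largest norm occurs only below the top, adding that row to the top row
transfers the norm by the ultrametric inequality, so no row swap (and no sign) is needed. -/
lemma exists_pivot (p : ℕ) [Fact p.Prime] {n : ℕ}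
    (A : Matrix (Fin (n + 1)) (Fin (n + 1)) ℚ_[p]) :
    ∃ t : Matrix (Fin (n + 1)) (Fin (n + 1)) ℤ_[p], t.det = 1 ∧
      ∀ i, ‖(t.map PadicInt.Coe.ringHom * A) i 0‖ ≤ ‖(t.map PadicInt.Coe.ringHom * A) 0 0‖ := by
  obtain ⟨m, hm⟩ := Finite.exists_max fun i => ‖A i 0‖
  by_cases h0 : ‖A m 0‖ ≤ ‖A 0 0‖
  · refine ⟨1, det_one, fun i => ?_⟩
    rw [Matrix.map_one _ (map_zero _) (map_one _), one_mul]
    exact (hm i).trans h0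
  · push Not at h0
    have hne : (0 : Fin (n + 1)) ≠ m := by
      rintro rfl
      exact lt_irrefl _ h0
    refine ⟨transvection 0 m 1, det_transvection_of_ne _ _ hne _, fun i => ?_⟩
    have hmap : (transvection 0 m (1 : ℤ_[p])).map PadicInt.Coe.ringHom
        = transvection 0 m (1 : ℚ_[p]) := by
      ext i j
      simp only [transvection, map_apply, Matrix.add_apply, Matrix.one_apply, Matrix.single_apply, map_add]
      split_ifs <;> simp
    have htop : ‖A 0 0 + A m 0‖ = ‖A m 0‖ := by
      rw [Padic.add_eq_max_of_ne h0.ne, max_eq_right h0.le]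
    rw [hmap, transvection_mul_apply_same, one_mul, htop]
    by_cases hi : i = 0
    · rw [hi, transvection_mul_apply_same, one_mul, htop]
    · rw [transvection_mul_apply_of_ne _ _ _ _ hi]
      exact hm i

lemma exists_mul_upperTriangular (p : ℕ) [Fact p.Prime] (n : ℕ)
    (A : Matrix (Fin n) (Fin n) ℚ_[p]) :
    ∃ g : Matrix (Fin n) (Fin n) ℤ_[p], g.det = 1 ∧
      ∀ i j : Fin n, j < i → (g.map PadicInt.Coe.ringHom * A) i j = 0 := by
  induction n with
  | zero => exact ⟨1, det_one, fun i => i.elim0⟩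
  | succ n ih =>
    obtain ⟨t, ht, hpiv⟩ := exists_pivot p A
    set B := t.map PadicInt.Coe.ringHom * A with hB
    -- If the pivot `B 0 0` vanishes, so does the whole column, and division by `0` gives `u = 0`.
    let u : Fin n → ℤ_[p] := fun i => ⟨-(B i.succ 0 / B 0 0), by
      rw [norm_neg, norm_div]
      exact div_le_one_of_le₀ (hpiv _) (norm_nonneg _)⟩
    have hu : ∀ i, (u i : ℚ_[p]) * B 0 0 + B i.succ 0 = 0 := by
      intro i
      by_cases hz : B 0 0 = 0
      · have := hpiv i.succ
        rw [hz, norm_zero, norm_le_zero_iff] at this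
        rw [hz, this, mul_zero, add_zero]
      · change -(B i.succ 0 / B 0 0) * B 0 0 + B i.succ 0 = 0
        field_simp
        ring
    obtain ⟨h, hdet, htri⟩ := ih (of fun i j => (u i : ℚ_[p]) * B 0 j.succ + B i.succ j.succ)
    -- Bordering by `h *ᵥ u` clears the first column by `u` and then applies `h` to the minor.
    refine ⟨borderMatrix (h *ᵥ u) h * t, by rw [det_mul, det_borderMatrix, hdet, ht, one_mul], ?_⟩
    have key : ∀ i j, ((borderMatrix (h *ᵥ u) h).map PadicInt.Coe.ringHom * B) (Fin.succ i) j
        = ∑ k, (h i k : ℚ_[p]) * ((u k : ℚ_[p]) * B 0 j + B k.succ j) := by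
      intro i j
      rw [Matrix.mul_apply, Fin.sum_univ_succ]
      simp only [borderMatrix, map_apply, of_apply, Fin.cons_succ, Fin.cons_zero, mulVec,
        dotProduct, map_sum, map_mul, mul_add, Finset.sum_add_distrib, Finset.sum_mul, mul_assoc]
      rfl
    intro i j hij
    rw [Matrix.map_mul, Matrix.mul_assoc, ← hB]
    obtain ⟨i, rfl⟩ := Fin.exists_succ_eq.2 (Fin.ne_zero_of_lt hij)
    rw [key]
    cases j using Fin.cases with
    | zero => simp [hu]
    | succ j => exact htri i j (Fin.succ_lt_succ_iff.1 hij)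

/-- **Iwasawa decomposition of `SL(n, ℚ_p)`**: every `n × n` matrix `A` over `ℚ_p` with
determinant `1` factors as `A = k * b` where `k` has determinant `1` and all entries of `k`
and of `k⁻¹` have norm at most `1` (i.e. `k ∈ SL(n, ℤ_p)`), and `b` has determinant `1` and
is upper triangular. -/
theorem iwasawa_SL (p : ℕ) [Fact p.Prime] (n : ℕ) (A : Matrix (Fin n) (Fin n) ℚ_[p])
    (hA : A.det = 1) :
    ∃ k b : Matrix (Fin n) (Fin n) ℚ_[p],
      k.det = 1 ∧ b.det = 1 ∧ A = k * b ∧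
      (∀ i j, ‖k i j‖ ≤ 1) ∧
      (∀ i j, ‖k⁻¹ i j‖ ≤ 1) ∧
      (∀ i j : Fin n, j < i → b i j = 0) := by
  obtain ⟨g, hg, htri⟩ := exists_mul_upperTriangular p n A
  have hadj : g * g.adjugate = 1 := by rw [mul_adjugate, hg, one_smul]
  have hadj' : g.adjugate * g = 1 := by rw [adjugate_mul, hg, one_smul]
  have hdet : ∀ M : Matrix (Fin n) (Fin n) ℤ_[p], M.det = 1 →
      (M.map PadicInt.Coe.ringHom).det = 1 := fun M hM => by
    rw [← RingHom.mapMatrix_apply, ← RingHom.map_det, hM, map_one]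
  have hinv : g.map PadicInt.Coe.ringHom * g.adjugate.map PadicInt.Coe.ringHom = 1 := by
    rw [← Matrix.map_mul, hadj, Matrix.map_one _ (map_zero _) (map_one _)]
  have hinv' : g.adjugate.map PadicInt.Coe.ringHom * g.map PadicInt.Coe.ringHom = 1 := by
    rw [← Matrix.map_mul, hadj', Matrix.map_one _ (map_zero _) (map_one _)]
  refine ⟨g.adjugate.map PadicInt.Coe.ringHom, g.map PadicInt.Coe.ringHom * A,
    hdet _ (by rw [det_adjugate, hg, one_pow]), by rw [det_mul, hdet g hg, hA, one_mul],
    by rw [← Matrix.mul_assoc, hinv', one_mul], fun i j => (g.adjugate i j).2, ?_, htri⟩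
  rw [Matrix.inv_eq_left_inv hinv]
  exact fun i j => (g i j).2
end

section
/- The intersection over all positive integers n of the subgroups of n-th powers of ℚ_pˣ is trivial: if x ∈ ℚ_pˣ is an n-th power for every positive integer n, then x = 1. -/
/-!
An `n`-th power has valuation divisible by `n`, so `v x` is divisible by every positive integer
and vanishes: `x` is a unit of `ℤ_p`, and so are all of its roots. The group `(ℤ/p^k)ˣ` is finite,
of order `m` say, so writing `x` as an `m`-th power shows `x ≡ 1` modulo `p^k`. This holds for
every `k`, and an element of `ℤ_p` is determined by its residues modulo all the `p^k`.
-/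

/-- The valuation of a divisible element is divisible by every positive integer, hence zero. -/
lemma norm_eq_one_of_forall_pow (p : ℕ) [Fact p.Prime] (x : ℚ_[p]ˣ)
    (hx : ∀ n : ℕ, 0 < n → ∃ y : ℚ_[p]ˣ, y ^ n = x) : ‖(x : ℚ_[p])‖ = 1 := by
  have hv : (x : ℚ_[p]).valuation = 0 := by
    obtain ⟨y, hy⟩ := hx ((x : ℚ_[p]).valuation.natAbs + 1) (Nat.succ_pos _)
    have h : (((x : ℚ_[p]).valuation.natAbs + 1 : ℕ) : ℤ) ∣ (x : ℚ_[p]).valuation :=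
      ⟨(y : ℚ_[p]).valuation, by rw [← Padic.valuation_pow, ← Units.val_pow_eq_pow_val, hy]⟩
    exact Int.eq_zero_of_abs_lt_dvd h (by rw [Int.abs_eq_natAbs]; omega)
  rw [Padic.norm_eq_zpow_neg_valuation x.ne_zero, hv, neg_zero, zpow_zero]

/-- The intersection of the subgroups of `n`-th powers of `ℚ_pˣ` over all positive
integers `n` is trivial: an element of `ℚ_pˣ` which is an `n`-th power for every positive
integer `n` equals `1`. -/
theorem padic_units_divisible_eq_one (p : ℕ) [Fact p.Prime] (x : ℚ_[p]ˣ)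
    (hx : ∀ n : ℕ, 0 < n → ∃ y : ℚ_[p]ˣ, y ^ n = x) :
    x = 1 := by
  have hnorm := norm_eq_one_of_forall_pow p x hx
  have key : ((PadicInt.mkUnits hnorm : ℤ_[p]ˣ) : ℤ_[p]) = 1 := by
    refine PadicInt.ext_of_toZModPow.mp fun k => ?_
    have : NeZero (p ^ k) := ⟨pow_ne_zero k (Fact.out : p.Prime).ne_zero⟩
    have hm : 0 < Fintype.card (ZMod (p ^ k))ˣ := Fintype.card_pos
    obtain ⟨y, hy⟩ := hx _ hm
    have hy1 : ‖(y : ℚ_[p])‖ = 1 := by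
      rw [← pow_eq_one_iff_of_nonneg (norm_nonneg _) hm.ne', ← norm_pow,
        ← Units.val_pow_eq_pow_val, hy, hnorm]
    have hpow : PadicInt.mkUnits hy1 ^ Fintype.card (ZMod (p ^ k))ˣ = PadicInt.mkUnits hnorm := by
      refine Units.ext (Subtype.ext ?_)
      rw [Units.val_pow_eq_pow_val, PadicInt.coe_pow, PadicInt.mkUnits_eq, PadicInt.mkUnits_eq,
        ← Units.val_pow_eq_pow_val, hy]
    have h1 := congrArg Units.val (pow_card_eq_one
      (x := Units.map (PadicInt.toZModPow (p := p) k).toMonoidHom (PadicInt.mkUnits hy1)))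
    rw [← map_pow, hpow] at h1
    rw [map_one]
    exact h1
  ext
  rw [← PadicInt.mkUnits_eq hnorm, key]
  rfl
end

section
/- Ideal group at an idempotent of a minimal left ideal: let I be a minimal left ideal of a monoid M and let u ∈ I be idempotent. Then u·I is a group under the multiplication of M with identity u; that is, u·I is closed under multiplication, u·q = q and q·u = q for every q ∈ u·I, and for every q ∈ u·I there exists q' ∈ u·I with q·q' = u and q'·q = u. -/
/-!
By minimality, the left ideal `M * x` equals `I` for every `x ∈ I`. Taking `x = u` shows that
`u` is a right identity on `I`. Taking `x = q ∈ u * I` gives `m` with `m * q = u`, and then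
`u * m * u` is a left inverse of `q` inside `u * I`. A monoid in which every element has a
left inverse is a group.
-/

/-- Every element of a minimal left ideal generates it. -/
theorem exists_mul_eq_of_minimal_left_ideal {M : Type*} [Monoid M] {I : Set M}
    (hleft : ∀ m : M, ∀ x ∈ I, m * x ∈ I)
    (hmin : ∀ J : Set M, J ⊆ I → J.Nonempty → (∀ m : M, ∀ x ∈ J, m * x ∈ J) → J = I)
    {x y : M} (hx : x ∈ I) (hy : y ∈ I) : ∃ m : M, m * x = y := by
  have h : Set.range (fun m : M => m * x) = I := by
    refine hmin _ ?_ ⟨_, 1, rfl⟩ ?_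
    · rintro _ ⟨m, rfl⟩
      exact hleft m x hx
    · rintro m _ ⟨k, rfl⟩
      exact ⟨m * k, mul_assoc m k x⟩
  rwa [← h] at hy

/-- **Ideal group at an idempotent of a minimal left ideal.** Let `I` be a minimal left
ideal of a monoid `M` (nonempty, closed under left multiplication by arbitrary elements,
and having no nonempty proper subset which is a left ideal) and let `u ∈ I` be idempotent.
Then `u • I = {u * a : a ∈ I}` is a group under the multiplication of `M` with
identity `u`: it is closed under multiplication, `u` is a two-sided identity on it, and
every element has a two-sided inverse in it relative to `u`. -/
theorem ideal_group_of_minimal_left_ideal {M : Type*} [Monoid M] (I : Set M)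
    (hne : I.Nonempty)
    (hleft : ∀ m : M, ∀ x ∈ I, m * x ∈ I)
    (hmin : ∀ J : Set M, J ⊆ I → J.Nonempty → (∀ m : M, ∀ x ∈ J, m * x ∈ J) → J = I)
    (u : M) (huI : u ∈ I) (hu : u * u = u) :
    (∀ q ∈ (u * ·) '' I, ∀ q' ∈ (u * ·) '' I, q * q' ∈ (u * ·) '' I) ∧
    (∀ q ∈ (u * ·) '' I, u * q = q ∧ q * u = q) ∧
    (∀ q ∈ (u * ·) '' I, ∃ q' ∈ (u * ·) '' I, q * q' = u ∧ q' * q = u) := by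
  have gen {x y : M} (hx : x ∈ I) (hy : y ∈ I) : ∃ m : M, m * x = y :=
    exists_mul_eq_of_minimal_left_ideal hleft hmin hx hy
  have mem : ∀ q ∈ (u * ·) '' I, q ∈ I := by
    rintro _ ⟨a, ha, rfl⟩
    exact hleft u a ha
  have left_id : ∀ q ∈ (u * ·) '' I, u * q = q := by
    rintro _ ⟨a, -, rfl⟩
    simp only [← mul_assoc, hu]
  have right_id : ∀ a ∈ I, a * u = a := by
    intro a ha
    obtain ⟨m, rfl⟩ := gen huI ha
    rw [mul_assoc, hu]
  have left_inv : ∀ q ∈ (u * ·) '' I, ∃ r ∈ (u * ·) '' I, r * q = u := by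
    intro q hq
    obtain ⟨m, hm⟩ := gen (mem q hq) huI
    refine ⟨u * (m * u), ⟨m * u, hleft m u huI, rfl⟩, ?_⟩
    rw [mul_assoc, mul_assoc, left_id q hq, hm, hu]
  refine ⟨?_, fun q hq => ⟨left_id q hq, right_id q (mem q hq)⟩, ?_⟩
  · intro q hq q' hq'
    exact ⟨q * q', hleft q q' (mem q' hq'), by simp only [← mul_assoc, left_id q hq]⟩
  · intro q hq
    obtain ⟨r, hr, hrq⟩ := left_inv q hq
    obtain ⟨s, hs, hsr⟩ := left_inv r hr
    -- A left inverse `s` of `r` must be `q`, so `r` is also a right inverse of `q`.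
    have hsq : s = q := by
      rw [← right_id s (mem s hs), ← hrq, ← mul_assoc, hsr, left_id q hq]
    exact ⟨r, hr, hsq ▸ hsr, hrq⟩
end
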